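/- Suppose φ : ℝ → ℝ is even, continuous, integrable, φ(0) = 1, and its Fourier transform φ̂ is nonnegative, integrable, and real-analytic on ℝ. Then for every λ > 0 the function P_∞(λ, ·) is not identically zero, i.e. ‖P_∞(λ, ·)‖_∞ > 0. -/

import Mathlib

open MeasureTheory Real

/-- Fourier transform normalized as `f̂(ω) = (1/√(2π)) ∫ f(x) e^{-iωx} dx`. -/
noncomputable def FT (f : ℝ → ℝ) (w : ℝ) : ℂ :=
  (1 / Real.sqrt (2 * Real.pi)) * ∫ x : ℝ, (f x : ℂ) * Complex.exp (-(Complex.I * w * x))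

/-- The Fourier cosine coefficients of the auxiliary function `H`:
`a 0 = 3/4`, `a 1 = 4/(3π)`, `a 2 = -1/4`, and
`a k = -4 sin(kπ/2) / (π k (k² - 4))` for `k ≥ 3`. -/
noncomputable def a : ℕ → ℝ
  | 0 => 3 / 4
  | 1 => 4 / (3 * Real.pi)
  | 2 => -(1 / 4)
  | k => -4 * Real.sin (k * Real.pi / 2) / (Real.pi * k * (k ^ 2 - 4))

/-- `A_∞(λ) = -Σ_{k=1}^∞ a_k φ(λk)`. -/
noncomputable def Ainf (φ : ℝ → ℝ) (lam : ℝ) : ℝ :=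
  -∑' k : ℕ, a (k + 1) * φ (lam * (k + 1))

/-- `P_∞(λ, x) = 2 A_∞(λ) φ(x) + Σ_{k=1}^∞ a_k (φ(x + λk) + φ(x - λk))`. -/
noncomputable def Pinf (φ : ℝ → ℝ) (lam x : ℝ) : ℝ :=
  2 * Ainf φ lam * φ x +
    ∑' k : ℕ, a (k + 1) * (φ (x + lam * (k + 1)) + φ (x - lam * (k + 1)))

/-!
`P_∞(λ, ·)` is a sum `∑ c_k (φ(· + λk) + φ(· - λk))` over `k ≥ 0`, with `c_0 = A_∞(λ)` and
`c_k = a_k` for `k ≥ 1`. Its Fourier transform is `2 g(λω) φ̂(ω)` with `g(t) = ∑ c_k cos(kt)`.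
If `P_∞(λ, ·)` vanished, then `g(λω)` would vanish wherever `φ̂(ω) ≠ 0`; since `φ̂` is analytic and
nonzero this is a dense set, so `g = 0` by continuity. By uniqueness of cosine coefficients all
`c_k` would be zero, but `a_1 ≠ 0`.
-/

/-! ### Cosine series -/

/-- The absolutely convergent cosine series `∑ c_k cos(kt)` with coefficients `c`; its value is only
meaningful when `c` is summable. -/
noncomputable def cosineSeries (c : ℕ → ℝ) (t : ℝ) : ℝ :=
  ∑' k : ℕ, c k * cos (k * t)

lemma norm_mul_cos_le (r t : ℝ) : ‖r * cos t‖ ≤ |r| := by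
  rw [norm_mul, norm_eq_abs, norm_eq_abs]
  exact mul_le_of_le_one_right (abs_nonneg r) (abs_cos_le_one t)

lemma hasSum_cosineSeries {c : ℕ → ℝ} (hc : Summable c) (t : ℝ) :
    HasSum (fun k : ℕ => c k * cos (k * t)) (cosineSeries c t) :=
  (Summable.of_norm_bounded hc.abs fun k => norm_mul_cos_le (c k) (k * t)).hasSum

lemma continuous_cosineSeries {c : ℕ → ℝ} (hc : Summable c) : Continuous (cosineSeries c) :=
  continuous_tsum (fun k => by fun_prop) hc.abs fun k t => norm_mul_cos_le (c k) (k * t)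

lemma integral_cos_int_mul {m : ℤ} (hm : m ≠ 0) : ∫ t in (0 : ℝ)..π, cos (m * t) = 0 := by
  rw [intervalIntegral.integral_comp_mul_left cos (Int.cast_ne_zero.2 hm), integral_cos,
    sin_int_mul_pi, mul_zero, sin_zero, sub_zero, smul_zero]

lemma integral_cos_mul_cos_of_ne {m n : ℕ} (hmn : m ≠ n) :
    ∫ t in (0 : ℝ)..π, cos (m * t) * cos (n * t) = 0 := by
  have product_to_sum (t : ℝ) : cos (m * t) * cos (n * t) =
      (1 / 2) * (cos (((m - n : ℤ) : ℝ) * t) + cos (((m + n : ℤ) : ℝ) * t)) := by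
    push_cast
    rw [sub_mul, add_mul, ← two_mul_cos_mul_cos]
    ring
  simp_rw [product_to_sum]
  rw [intervalIntegral.integral_const_mul, intervalIntegral.integral_add
      (Continuous.intervalIntegrable (by fun_prop) _ _)
      (Continuous.intervalIntegrable (by fun_prop) _ _),
    integral_cos_int_mul (by omega), integral_cos_int_mul (by omega), add_zero, mul_zero]

lemma integral_cos_mul_cos_self_pos (n : ℕ) :
    0 < ∫ t in (0 : ℝ)..π, cos (n * t) * cos (n * t) :=
  intervalIntegral.integral_pos pi_pos (Continuous.continuousOn (by fun_prop))
    (fun _ _ => mul_self_nonneg _) ⟨0, ⟨le_rfl, pi_pos.le⟩, by simp⟩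

lemma integral_cosineSeries_mul_cos {c : ℕ → ℝ} (hc : Summable c) (n : ℕ) :
    ∫ t in (0 : ℝ)..π, cosineSeries c t * cos (n * t) =
      c n * ∫ t in (0 : ℝ)..π, cos (n * t) * cos (n * t) := by
  have termwise : HasSum (fun k : ℕ => ∫ t in (0 : ℝ)..π, c k * cos (k * t) * cos (n * t))
      (∫ t in (0 : ℝ)..π, cosineSeries c t * cos (n * t)) :=
    intervalIntegral.hasSum_integral_of_dominated_convergence (fun k _ => |c k|)
      (fun k => Continuous.aestronglyMeasurable (by fun_prop))
      (fun k => .of_forall fun t _ => (norm_mul_cos_le _ _).trans (norm_mul_cos_le _ _))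
      (.of_forall fun _ _ => hc.abs) (continuous_const.intervalIntegrable _ _)
      (.of_forall fun t _ => (hasSum_cosineSeries hc t).mul_right _)
  simp_rw [mul_assoc, intervalIntegral.integral_const_mul] at termwise
  refine termwise.unique (hasSum_single n fun k hk => ?_)
  rw [integral_cos_mul_cos_of_ne hk, mul_zero]

lemma eq_zero_of_cosineSeries_eq_zero {c : ℕ → ℝ} (hc : Summable c) (h : cosineSeries c = 0) :
    c = 0 := by
  funext n
  have orthogonality := integral_cosineSeries_mul_cos hc n
  simp only [h, Pi.zero_apply, zero_mul, intervalIntegral.integral_zero] at orthogonality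
  exact (mul_eq_zero.1 orthogonality.symm).resolve_right (integral_cos_mul_cos_self_pos n).ne'

/-! ### The Fourier transform -/

lemma norm_exp_neg_I_mul (w x : ℝ) : ‖Complex.exp (-(Complex.I * w * x))‖ = 1 := by
  rw [show -(Complex.I * w * x) = ((-(w * x) : ℝ) : ℂ) * Complex.I by push_cast; ring]
  exact Complex.norm_exp_ofReal_mul_I _

lemma integrable_mul_exp_neg_I {f : ℝ → ℝ} (hf : Integrable f) (w : ℝ) :
    Integrable fun x : ℝ => (f x : ℂ) * Complex.exp (-(Complex.I * w * x)) :=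
  (hf.ofReal (𝕜 := ℂ)).mul_bdd (c := 1) (Continuous.aestronglyMeasurable (by fun_prop))
    (.of_forall fun x => (norm_exp_neg_I_mul w x).le)

lemma FT_zero (w : ℝ) : FT 0 w = 0 := by
  simp [FT]

lemma FT_const_mul (r : ℝ) (f : ℝ → ℝ) (w : ℝ) : FT (fun x => r * f x) w = r * FT f w := by
  simp only [FT, Complex.ofReal_mul, mul_assoc, integral_const_mul]
  ring

lemma FT_add {f g : ℝ → ℝ} (hf : Integrable f) (hg : Integrable g) (w : ℝ) :
    FT (fun x => f x + g x) w = FT f w + FT g w := by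
  simp only [FT, Complex.ofReal_add, add_mul]
  rw [integral_add (integrable_mul_exp_neg_I hf w) (integrable_mul_exp_neg_I hg w), mul_add]

lemma FT_comp_add_right (f : ℝ → ℝ) (s w : ℝ) :
    FT (fun x => f (x + s)) w = Complex.exp (Complex.I * w * s) * FT f w := by
  have shift : ∫ x : ℝ, (f (x + s) : ℂ) * Complex.exp (-(Complex.I * w * x)) =
      Complex.exp (Complex.I * w * s) *
        ∫ x : ℝ, (f x : ℂ) * Complex.exp (-(Complex.I * w * x)) := by
    rw [← integral_const_mul, ← integral_add_right_eq_self
      (fun x : ℝ => Complex.exp (Complex.I * w * s) *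
        ((f x : ℂ) * Complex.exp (-(Complex.I * w * x)))) s]
    refine integral_congr_ae (.of_forall fun x => ?_)
    dsimp only
    rw [mul_left_comm, ← Complex.exp_add]
    push_cast
    ring_nf
  rw [FT, shift, mul_left_comm, FT]

lemma hasSum_FT {ι : Type*} [Countable ι] {f : ι → ℝ → ℝ} (hf : ∀ i, Integrable (f i))
    (hsum : Summable fun i => ∫ x, |f i x|) (w : ℝ) :
    HasSum (fun i => FT (f i) w) (FT (fun x => ∑' i, f i x) w) := by
  have termwise := hasSum_integral_of_summable_integral_norm
    (fun i => integrable_mul_exp_neg_I (hf i) w)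
    (by simpa only [norm_mul, norm_exp_neg_I_mul, mul_one, Complex.norm_real, norm_eq_abs]
      using hsum)
  simp only [tsum_mul_right, ← Complex.ofReal_tsum] at termwise
  exact termwise.mul_left _

lemma fourier_eq_FT (f : ℝ → ℝ) (w : ℝ) :
    FourierTransform.fourier (fun x => (f x : ℂ)) w =
      (√(2 * π) : ℂ) * FT f (2 * π * w) := by
  have sqrt_ne_zero : (√(2 * π) : ℂ) ≠ 0 := Complex.ofReal_ne_zero.2 (by positivity)
  rw [FT, ← mul_assoc, mul_one_div_cancel sqrt_ne_zero, one_mul,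
    fourier_real_eq_integral_exp_smul]
  refine integral_congr_ae (.of_forall fun x => ?_)
  dsimp only
  rw [smul_eq_mul, mul_comm]
  push_cast
  ring_nf

lemma FT_inversion {f : ℝ → ℝ} (hcont : Continuous f) (hint : Integrable f)
    (hFT : Integrable (FT f)) (x : ℝ) :
    (f x : ℂ) = ∫ v : ℝ, Complex.exp ((2 * π * (v * x) : ℝ) * Complex.I) *
      (√(2 * π) * FT f (2 * π * v)) := by
  have fourier_eq : FourierTransform.fourier (fun x => (f x : ℂ)) =
      fun v => (√(2 * π) : ℂ) * FT f (2 * π * v) := funext (fourier_eq_FT f)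
  have fourier_integrable : Integrable (FourierTransform.fourier fun x => (f x : ℂ)) := by
    rw [fourier_eq]
    exact (hFT.comp_mul_left' (by positivity)).const_mul _
  have hcont_complex : Continuous fun x => (f x : ℂ) := by fun_prop
  have inversion := congrFun
    (hcont_complex.fourierInv_fourier_eq hint.ofReal fourier_integrable) x
  rw [fourier_eq, fourierInv_eq'] at inversion
  simpa [mul_comm x] using inversion.symm

lemma abs_le_integral_norm_FT {f : ℝ → ℝ} (hcont : Continuous f) (hint : Integrable f)
    (hFT : Integrable (FT f)) (x : ℝ) :
    |f x| ≤ ∫ v : ℝ, ‖√(2 * π) * FT f (2 * π * v)‖ := by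
  rw [← norm_eq_abs, ← Complex.norm_real, FT_inversion hcont hint hFT x]
  refine (norm_integral_le_integral_norm _).trans_eq ?_
  simp only [norm_mul, Complex.norm_exp_ofReal_mul_I, one_mul]

lemma FT_ne_zero {f : ℝ → ℝ} (hcont : Continuous f) (hint : Integrable f) (hf : f ≠ 0) :
    FT f ≠ 0 := by
  intro hzero
  have hFT : Integrable (FT f) := hzero ▸ integrable_zero ℝ ℂ volume
  refine hf (funext fun x => Complex.ofReal_eq_zero.1 ?_)
  simp [FT_inversion hcont hint hFT x, hzero]

lemma dense_support_of_analyticOnNhd {E F : Type*} [NormedAddCommGroup E] [NormedSpace ℝ E]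
    [NormedAddCommGroup F] [NormedSpace ℝ F] {f : E → F}
    (hf : AnalyticOnNhd ℝ f Set.univ) (hf₀ : f ≠ 0) : Dense (Function.support f) := by
  by_contra hdense
  obtain ⟨x, hx⟩ := not_forall.1 hdense
  refine hf₀ (hf.eq_of_eventuallyEq analyticOnNhd_const (z₀ := x) ?_)
  filter_upwards [isClosed_closure.isOpen_compl.mem_nhds hx] with y hy
  exact Function.notMem_support.1 fun hy' => hy (subset_closure hy')

lemma dense_support_FT {φ : ℝ → ℝ} (hcont : Continuous φ) (hint : Integrable φ) (hφ : φ ≠ 0)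
    (hreal : ∀ w, (FT φ w).im = 0) (hanalytic : AnalyticOnNhd ℝ (fun w => (FT φ w).re) Set.univ) :
    Dense (Function.support (FT φ)) := by
  have re_ne_zero : (fun w => (FT φ w).re) ≠ 0 := fun hre =>
    FT_ne_zero hcont hint hφ (funext fun w => Complex.ext (congrFun hre w) (hreal w))
  exact (dense_support_of_analyticOnNhd hanalytic re_ne_zero).mono
    (Function.support_comp_subset Complex.zero_re (FT φ))

/-! ### Sums of symmetric translates -/

/-- The sum `φ(x + s) + φ(x - s)` of the two translates of `φ` by `±s`. -/
def symTranslate (φ : ℝ → ℝ) (s x : ℝ) : ℝ :=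
  φ (x + s) + φ (x - s)

/-- The sum `∑ c_k (φ(x + λk) + φ(x - λk))` over `k ≥ 0`, of which `P_∞(λ, x)` is an instance; the
index `k = 0` contributes `2 c_0 φ(x)`. -/
noncomputable def symTranslateSum (c : ℕ → ℝ) (lam : ℝ) (φ : ℝ → ℝ) (x : ℝ) : ℝ :=
  ∑' k : ℕ, c k * symTranslate φ (lam * k) x

section SymTranslateSum

variable {φ : ℝ → ℝ} {c : ℕ → ℝ} {C : ℝ}

lemma integrable_symTranslate (hφ : Integrable φ) (s : ℝ) : Integrable (symTranslate φ s) :=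
  (hφ.comp_add_right s).add (hφ.comp_sub_right s)

lemma integral_abs_symTranslate_le (hφ : Integrable φ) (s : ℝ) :
    ∫ x, |symTranslate φ s x| ≤ 2 * ∫ x, |φ x| := by
  have hadd := (hφ.comp_add_right s).abs
  have hsub := (hφ.comp_sub_right s).abs
  calc ∫ x, |symTranslate φ s x| ≤ ∫ x, (|φ (x + s)| + |φ (x - s)|) :=
        integral_mono (integrable_symTranslate hφ s).abs (hadd.add hsub) fun x => abs_add_le _ _
    _ = 2 * ∫ x, |φ x| := by
        rw [integral_add hadd hsub, integral_add_right_eq_self (fun x => |φ x|),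
          integral_sub_right_eq_self (fun x => |φ x|), two_mul]

lemma FT_symTranslate (hφ : Integrable φ) (s w : ℝ) :
    FT (symTranslate φ s) w = 2 * cos (s * w) * FT φ w := by
  have eq_add_translates : symTranslate φ s = fun x => φ (x + s) + φ (x + -s) := rfl
  rw [eq_add_translates, FT_add (hφ.comp_add_right s) (hφ.comp_add_right (-s)), FT_comp_add_right,
    FT_comp_add_right, Complex.ofReal_cos, Complex.two_cos, add_mul]
  push_cast
  ring_nf

lemma FT_symTranslateSum (hφ : Integrable φ) (hc : Summable c) (lam w : ℝ) :
    FT (symTranslateSum c lam φ) w = 2 * cosineSeries c (lam * w) * FT φ w := by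
  have hL1 : Summable fun k : ℕ => ∫ x, |c k * symTranslate φ (lam * k) x| := by
    simp only [abs_mul, integral_const_mul]
    exact .of_nonneg_of_le (fun k => by positivity)
      (fun k => mul_le_mul_of_nonneg_left (integral_abs_symTranslate_le hφ _) (abs_nonneg _))
      (hc.abs.mul_right _)
  have termwise := hasSum_FT (fun k : ℕ => (integrable_symTranslate hφ (lam * k)).const_mul (c k))
    hL1 w
  have multiplier := (Complex.hasSum_ofReal.2 (hasSum_cosineSeries hc (lam * w))).mul_right
    (2 * FT φ w)
  refine (termwise.unique (multiplier.congr_fun fun k => ?_)).trans (by ring)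
  rw [FT_const_mul, FT_symTranslate hφ]
  push_cast
  ring_nf

lemma symTranslateSum_ne_zero (hφ : Integrable φ) (hc : Summable c) (hc₀ : c ≠ 0)
    (hdense : Dense (Function.support (FT φ))) {lam : ℝ} (hlam : lam ≠ 0) :
    symTranslateSum c lam φ ≠ 0 := by
  intro hzero
  have vanishes_on_support :
      Set.EqOn (fun w => cosineSeries c (lam * w)) 0 (Function.support (FT φ)) := by
    intro w hw
    have transform := FT_symTranslateSum hφ hc lam w
    rw [hzero, FT_zero] at transform
    simpa [Function.mem_support.1 hw] using transform.symm
  have vanishes := Continuous.ext_on hdense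
    ((continuous_cosineSeries hc).comp (continuous_const_mul lam)) continuous_zero
    vanishes_on_support
  refine hc₀ (eq_zero_of_cosineSeries_eq_zero hc (funext fun t => ?_))
  have vanishes_at := congrFun vanishes (t / lam)
  rwa [Function.comp_apply, mul_div_cancel₀ t hlam] at vanishes_at

lemma norm_mul_symTranslate_le (hC : ∀ x, |φ x| ≤ C) (r s x : ℝ) :
    ‖r * symTranslate φ s x‖ ≤ |r| * (2 * C) := by
  rw [norm_mul, norm_eq_abs, norm_eq_abs]
  gcongr
  exact (abs_add_le _ _).trans ((add_le_add (hC _) (hC _)).trans_eq (two_mul C).symm)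

lemma summable_mul_symTranslate (hC : ∀ x, |φ x| ≤ C) (hc : Summable c) (lam x : ℝ) :
    Summable fun k : ℕ => c k * symTranslate φ (lam * k) x :=
  .of_norm_bounded (hc.abs.mul_right _) fun k => norm_mul_symTranslate_le hC (c k) (lam * k) x

lemma bddAbove_range_abs_symTranslateSum (hC : ∀ x, |φ x| ≤ C) (hc : Summable c) (lam : ℝ) :
    BddAbove (Set.range fun x => |symTranslateSum c lam φ x|) := by
  refine ⟨∑' k, |c k| * (2 * C), ?_⟩
  rintro _ ⟨x, rfl⟩
  exact tsum_of_norm_bounded (hc.abs.mul_right _).hasSum fun k =>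
    norm_mul_symTranslate_le hC (c k) (lam * k) x

end SymTranslateSum

lemma iSup_abs_pos {ι : Type*} {f : ι → ℝ} (hbdd : BddAbove (Set.range fun i => |f i|))
    (hf : f ≠ 0) : 0 < ⨆ i, |f i| := by
  obtain ⟨i, hi⟩ := Function.ne_iff.1 hf
  exact (abs_pos.2 hi).trans_le (le_ciSup hbdd i)

/-! ### The function `P_∞` -/

lemma abs_a_le {k : ℕ} (hk : 3 ≤ k) : |a k| ≤ 4 / (k : ℝ) ^ 2 := by
  obtain ⟨n, rfl⟩ := Nat.exists_eq_add_of_le' hk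
  have hx : (3 : ℝ) ≤ (n + 3 : ℕ) := by exact_mod_cast hk
  set x : ℝ := ((n + 3 : ℕ) : ℝ)
  have denominator_ge : x ^ 2 ≤ π * x * (x ^ 2 - 4) := by
    have : x ≤ π * (x ^ 2 - 4) :=
      calc x ≤ 3 * (x ^ 2 - 4) := by nlinarith
        _ ≤ π * (x ^ 2 - 4) := mul_le_mul_of_nonneg_right pi_gt_three.le (by nlinarith)
    nlinarith
  have numerator_le : |-4 * sin (x * π / 2)| ≤ 4 := by
    rw [abs_mul, abs_neg, abs_of_pos four_pos]
    linarith [abs_sin_le_one (x * π / 2)]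
  have hx_sq : 0 < x ^ 2 := by positivity
  rw [show a (n + 3) = -4 * sin (x * π / 2) / (π * x * (x ^ 2 - 4)) from rfl, abs_div,
    abs_of_pos (hx_sq.trans_le denominator_ge)]
  exact div_le_div₀ (by norm_num) numerator_le hx_sq denominator_ge

lemma summable_a : Summable a := by
  have hbound : Summable fun k : ℕ => 4 / (k : ℝ) ^ 2 := by
    simpa only [div_eq_mul_inv] using (summable_nat_pow_inv.2 one_lt_two).mul_left 4
  refine hbound.of_norm_bounded_eventually_nat ?_
  filter_upwards [Filter.eventually_ge_atTop 3] with k hk using abs_a_le hk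

/-- The coefficients for which `P_∞(λ, ·)` becomes a `symTranslateSum`: the term `2 A_∞(λ) φ(x)`
is the one of index `0`, so `a 0` is replaced by `A_∞(λ)`. -/
noncomputable def pinfCoeff (φ : ℝ → ℝ) (lam : ℝ) : ℕ → ℝ :=
  Function.update a 0 (Ainf φ lam)

lemma summable_pinfCoeff (φ : ℝ → ℝ) (lam : ℝ) : Summable (pinfCoeff φ lam) :=
  summable_a.update 0 (Ainf φ lam)

lemma pinfCoeff_ne_zero (φ : ℝ → ℝ) (lam : ℝ) : pinfCoeff φ lam ≠ 0 := by
  refine Function.ne_iff.2 ⟨1, ?_⟩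
  rw [pinfCoeff, Function.update_of_ne one_ne_zero]
  exact div_ne_zero four_ne_zero (by positivity)

lemma Pinf_eq_symTranslateSum {φ : ℝ → ℝ} {C : ℝ} (hC : ∀ x, |φ x| ≤ C) (lam : ℝ) :
    Pinf φ lam = symTranslateSum (pinfCoeff φ lam) lam φ := by
  funext x
  rw [symTranslateSum,
    (summable_mul_symTranslate hC (summable_pinfCoeff φ lam) lam x).tsum_eq_zero_add]
  simp only [Pinf, pinfCoeff, symTranslate, Function.update_self,
    Function.update_of_ne (Nat.succ_ne_zero _), Nat.cast_zero, mul_zero, add_zero, sub_zero,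
    Nat.cast_add, Nat.cast_one]
  ring

theorem Pinf_not_identically_zero_general {φ : ℝ → ℝ} {C : ℝ} (hint : Integrable φ)
    (hC : ∀ x, |φ x| ≤ C) (hdense : Dense (Function.support (FT φ))) {lam : ℝ} (hlam : lam ≠ 0) :
    0 < ⨆ x, |Pinf φ lam x| := by
  have hc := summable_pinfCoeff φ lam
  rw [Pinf_eq_symTranslateSum hC]
  exact iSup_abs_pos (bddAbove_range_abs_symTranslateSum hC hc lam)
    (symTranslateSum_ne_zero hint hc (pinfCoeff_ne_zero φ lam) hdense hlam)

theorem Pinf_not_identically_zero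
    (φ : ℝ → ℝ) (heven : ∀ x, φ (-x) = φ x) (hcont : Continuous φ)
    (hint : Integrable φ) (hφ0 : φ 0 = 1)
    (hFTreal : ∀ w : ℝ, (FT φ w).im = 0)
    (hFTnonneg : ∀ w : ℝ, 0 ≤ (FT φ w).re)
    (hFTint : Integrable (FT φ))
    (hFTanalytic : AnalyticOnNhd ℝ (fun w => (FT φ w).re) Set.univ)
    (lam : ℝ) (hlam : 0 < lam) :
    0 < ⨆ x, |Pinf φ lam x| := by
  have hφ : φ ≠ 0 := Function.ne_iff.2 ⟨0, by simp [hφ0]⟩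
  exact Pinf_not_identically_zero_general hint (abs_le_integral_norm_FT hcont hint hFTint)
    (dense_support_FT hcont hint hφ hFTreal hFTanalytic) hlam.ne'
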